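/- With the Lie-algebra setup below (Case B), let the bracket be [x₁,x₂] = λ₁x₁ + λ₂x₂ − (λ₁+λ₂)x₃, [x₂,x₃] = −(λ₁+λ₂)x₁ + λ₁x₂ + λ₂x₃, [x₁,x₃] = −λ₂x₁ + (λ₁+λ₂)x₂ − λ₁x₃ for real constants λ₁, λ₂. Then: (1) this bracket satisfies the Jacobi identity; (2) F(x₁,x₁,x₁) = F(x₂,x₂,x₂) = F(x₃,x₃,x₃) = 2(λ₁ − λ₂), θ₁ = θ₂ = θ₃ = 3(λ₁ − λ₂), and θ*₁ = θ*₂ = θ*₃ = (3/2)(λ₂ − λ₁); (3) R(x₁,x₂,x₁,x₂) = R(x₁,x₃,x₁,x₃) = R(x₂,x₃,x₂,x₃) = (3/4)(λ₁ − λ₂)²; (4) ρ(xᵢ,xⱼ) = −(3/2)(λ₁ − λ₂)² if i = j and 0 if i ≠ j, the scalar curvature is τ = −(9/2)(λ₁ − λ₂)², and ρ = (τ/3)·g, i.e. the manifold is Einstein; (5) for every pair of linearly independent vectors x, y ∈ ℝ³ the sectional curvature k(x,y) = R(x,y,x,y)/(g(x,x)g(y,y) − g(x,y)²) equals (3/4)(λ₁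 − λ₂)². -/

import Mathlib

open scoped BigOperators

/-- The underlying vector space ℝ³. -/
abbrev V := Fin 3 → ℝ

/-- The standard basis `x₁, x₂, x₃` of ℝ³ (indexed from 0). -/
def e (i : Fin 3) : V := Pi.single i 1

/-- The standard inner product `g` on ℝ³ (the basis `e` is orthonormal). -/
def ip (x y : V) : ℝ := ∑ i, x i * y i

/-- The circulant structure `Q`: `Q x₁ = x₂`, `Q x₂ = x₃`, `Q x₃ = x₁`. -/
def Qv (x : V) : V := fun j => x (j - 1)

/-- The associated metric `g̃(y,z) = g(y,Qz) + g(Qy,z)`. -/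
def gtil (x y : V) : ℝ := ip x (Qv y) + ip (Qv x) y

/-- Bilinearity of a map `V → V → V`. -/
def Bilin (f : V → V → V) : Prop :=
  (∀ (a : ℝ) (x y z : V), f (a • x + y) z = a • f x z + f y z) ∧
  (∀ (a : ℝ) (x y z : V), f x (a • y + z) = a • f x y + f x z)

/-- Skew-symmetry of a map `V → V → V`. -/
def Skew (f : V → V → V) : Prop := ∀ x y, f x y = - f y x

/-- The Jacobi identity for a bracket. -/
def Jacobi (br : V → V → V) : Prop :=
  ∀ x y z, br x (br y z) + br y (br z x) + br z (br x y) = 0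

/-- The Koszul formula determining the Levi-Civita connection `∇` of the
left-invariant metric `g` on the basis:
`2g(∇_{xᵢ}xⱼ, xₖ) = g([xᵢ,xⱼ],xₖ) + g([xₖ,xᵢ],xⱼ) + g([xₖ,xⱼ],xᵢ)`. -/
def Koszul (br nabla : V → V → V) : Prop :=
  ∀ i j k : Fin 3, 2 * ip (nabla (e i) (e j)) (e k) =
    ip (br (e i) (e j)) (e k) + ip (br (e k) (e i)) (e j) + ip (br (e k) (e j)) (e i)

/-- The curvature operator `R(x,y)z = ∇ₓ∇_y z − ∇_y∇ₓz − ∇_{[x,y]}z`. -/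
def Rop (br nabla : V → V → V) (x y z : V) : V :=
  nabla x (nabla y z) - nabla y (nabla x z) - nabla (br x y) z

/-- The curvature tensor of type (0,4): `R(x,y,z,u) = g(R(x,y)z, u)`. -/
def Rten (br nabla : V → V → V) (x y z u : V) : ℝ := ip (Rop br nabla x y z) u

/-- The Ricci tensor `ρ(y,z) = Σᵢ R(xᵢ,y,z,xᵢ)`. -/
def ricci (br nabla : V → V → V) (y z : V) : ℝ := ∑ i, Rten br nabla (e i) y z (e i)

/-- The scalar curvature `τ = Σᵢ ρ(xᵢ,xᵢ)`. -/
def scalc (br nabla : V → V → V) : ℝ := ∑ i, ricci br nabla (e i) (e i)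

/-- The fundamental tensor `F(x,y,z) = −g̃(∇ₓy, z) − g̃(y, ∇ₓz)`
(the covariant derivative of `g̃`, which has constant components in this frame). -/
def Fop (nabla : V → V → V) (x y z : V) : ℝ := -(gtil (nabla x y) z) - gtil y (nabla x z)

/-- The Lee form `θₖ = Σᵢ F(xᵢ,xᵢ,xₖ)`. -/
def lee (nabla : V → V → V) (k : Fin 3) : ℝ := ∑ i, Fop nabla (e i) (e i) (e k)

/-- The Lee form `θ*ₖ = Σᵢ F(xᵢ,Qxᵢ,xₖ)`. -/
def leeStar (nabla : V → V → V) (k : Fin 3) : ℝ := ∑ i, Fop nabla (e i) (Qv (e i)) (e k)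

theorem bilin_expand (f : V → V → V) (hf : Bilin f) (x y : V) :
    f x y = ∑ i, ∑ j, (x i * y j) • f (e i) (e j) := by
  obtain ⟨h1, h2⟩ := hf
  have z1 : ∀ z, f 0 z = 0 := by
    intro z
    have := h1 1 0 0 z
    simpa using this
  have z2 : ∀ z, f z 0 = 0 := by
    intro z
    have := h2 1 z 0 0
    simpa using this
  have hx : ∀ x : V, x = x 0 • e 0 + (x 1 • e 1 + (x 2 • e 2 + 0)) := by
    intro x
    ext k
    fin_cases k <;> simp [e]
  have a1 : ∀ x z : V, f x z = x 0 • f (e 0) z + (x 1 • f (e 1) z + x 2 • f (e 2) z) := by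
    intro x z
    conv_lhs => rw [hx x]
    rw [h1, h1, h1, z1, add_zero]
  have a2 : ∀ z x : V, f z x = x 0 • f z (e 0) + (x 1 • f z (e 1) + x 2 • f z (e 2)) := by
    intro z x
    conv_lhs => rw [hx x]
    rw [h2, h2, h2, z2, add_zero]
  rw [a1, a2 (e 0), a2 (e 1), a2 (e 2)]
  simp only [Fin.sum_univ_three]
  module

/-- Case B: for the bracket
`[x₁,x₂] = λ₁x₁ + λ₂x₂ − (λ₁+λ₂)x₃`, `[x₂,x₃] = −(λ₁+λ₂)x₁ + λ₁x₂ + λ₂x₃`,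
`[x₁,x₃] = −λ₂x₁ + (λ₁+λ₂)x₂ − λ₁x₃`: the Jacobi identity holds; the diagonal
components of `F` and the Lee forms are as stated; the basic curvature components
equal `(3/4)(λ₁ − λ₂)²`; `ρ = (τ/3)g` with `τ = −(9/2)(λ₁ − λ₂)²` (Einstein); and
every 2-plane has sectional curvature `(3/4)(λ₁ − λ₂)²`. -/
theorem case_B_properties
    (br : V → V → V) (hbil : Bilin br) (hskew : Skew br)
    (nabla : V → V → V) (hnbil : Bilin nabla) (hkos : Koszul br nabla)
    (l1 l2 : ℝ)
    (h12 : br (e 0) (e 1) = l1 • e 0 + l2 • e 1 - (l1 + l2) • e 2)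
    (h23 : br (e 1) (e 2) = -(l1 + l2) • e 0 + l1 • e 1 + l2 • e 2)
    (h13 : br (e 0) (e 2) = -l2 • e 0 + (l1 + l2) • e 1 - l1 • e 2) :
    -- (1) the Jacobi identity holds
    Jacobi br ∧
    -- (2) fundamental tensor and Lee forms
    (Fop nabla (e 0) (e 0) (e 0) = 2 * (l1 - l2) ∧
     Fop nabla (e 1) (e 1) (e 1) = 2 * (l1 - l2) ∧
     Fop nabla (e 2) (e 2) (e 2) = 2 * (l1 - l2) ∧
     (∀ k : Fin 3, lee nabla k = 3 * (l1 - l2)) ∧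
     (∀ k : Fin 3, leeStar nabla k = (3/2) * (l2 - l1))) ∧
    -- (3) curvature components
    (Rten br nabla (e 0) (e 1) (e 0) (e 1) = (3/4) * (l1 - l2)^2 ∧
     Rten br nabla (e 0) (e 2) (e 0) (e 2) = (3/4) * (l1 - l2)^2 ∧
     Rten br nabla (e 1) (e 2) (e 1) (e 2) = (3/4) * (l1 - l2)^2) ∧
    -- (4) Ricci tensor, scalar curvature, Einstein condition
    ((∀ i j : Fin 3, ricci br nabla (e i) (e j) =
        if i = j then -(3/2) * (l1 - l2)^2 else 0) ∧
     scalc br nabla = -(9/2) * (l1 - l2)^2 ∧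
     (∀ x y : V, ricci br nabla x y = (scalc br nabla / 3) * ip x y)) ∧
    -- (5) constant sectional curvature
    (∀ x y : V, LinearIndependent ℝ ![x, y] →
      Rten br nabla x y x y / (ip x x * ip y y - (ip x y)^2) = (3/4) * (l1 - l2)^2) := by
  have ev : ∀ i j : Fin 3, e i j = if j = i then 1 else 0 := by
    intro i j
    simp [e, Pi.single_apply]
  have hself : ∀ x, br x x = 0 := fun x => self_eq_neg.mp (hskew x x)
  have hbr : ∀ x y : V, br x y =
      ![l1 * (x 0 * y 1 - x 1 * y 0) - (l1 + l2) * (x 1 * y 2 - x 2 * y 1)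
          - l2 * (x 0 * y 2 - x 2 * y 0),
        l2 * (x 0 * y 1 - x 1 * y 0) + l1 * (x 1 * y 2 - x 2 * y 1)
          + (l1 + l2) * (x 0 * y 2 - x 2 * y 0),
        -(l1 + l2) * (x 0 * y 1 - x 1 * y 0) + l2 * (x 1 * y 2 - x 2 * y 1)
          - l1 * (x 0 * y 2 - x 2 * y 0)] := by
    intro x y
    rw [bilin_expand br hbil x y]
    simp only [Fin.sum_univ_three, hself, hskew (e 1) (e 0), hskew (e 2) (e 0),
      hskew (e 2) (e 1), h12, h13, h23]
    ext k
    fin_cases k <;> simp [ev] <;> ring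
  have hnb : ∀ x y : V, nabla x y =
      ![l1 * x 0 * y 1 - l2 * x 0 * y 2 + l2 * x 1 * y 1 - l1 * x 2 * y 2
          - (l1 + l2) / 2 * (x 1 * y 2 - x 2 * y 1),
        -l1 * x 0 * y 0 - l2 * x 1 * y 0 + l1 * x 1 * y 2 + l2 * x 2 * y 2
          + (l1 + l2) / 2 * (x 0 * y 2 - x 2 * y 0),
        l2 * x 0 * y 0 - l1 * x 1 * y 1 - l2 * x 2 * y 1 + l1 * x 2 * y 0
          - (l1 + l2) / 2 * (x 0 * y 1 - x 1 * y 0)] := by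
    intro x y
    have hc : ∀ i j k : Fin 3, nabla (e i) (e j) k =
        (br (e i) (e j) k + br (e k) (e i) j + br (e k) (e j) i) / 2 := by
      intro i j k
      have := hkos i j k
      simp only [ip, ev, mul_ite, mul_one, mul_zero, Finset.sum_ite_eq', Finset.sum_ite_eq,
        Finset.mem_univ, if_true] at this
      linarith
    rw [bilin_expand nabla hnbil x y]
    ext k
    simp only [Fin.sum_univ_three]
    fin_cases k <;> simp [hc, hbr, ev] <;> ring
  clear hkos h12 h13 h23 hself hbil hnbil hskew
  have hR : ∀ x y z u : V, Rten br nabla x y z u =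
      (3/4) * (l1 - l2)^2 * (ip x z * ip y u - ip x u * ip y z) := by
    intro x y z u
    simp only [Rten, Rop, ip, Fin.sum_univ_three, Pi.sub_apply, hbr, hnb]
    simp
    ring
  have hF : ∀ x y z : V, Fop nabla x y z = 
     -(nabla x y 0 * (z 1 + z 2) + nabla x y 1 * (z 0 + z 2) + nabla x y 2 * (z 0 + z 1))
     -(nabla x z 0 * (y 1 + y 2) + nabla x z 1 * (y 0 + y 2) + nabla x z 2 * (y 0 + y 1)) := by
    intro x y z
    have q0 : ∀ v : V, Qv v 0 = v 2 := fun v => rfl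
    have q1 : ∀ v : V, Qv v 1 = v 0 := fun v => rfl
    have q2 : ∀ v : V, Qv v 2 = v 1 := fun v => rfl
    simp only [Fop, gtil, ip, Fin.sum_univ_three, q0, q1, q2]
    ring
  have hQ : ∀ i : Fin 3, Qv (e i) = e (i + 1) := by
    intro i
    ext k
    simp only [Qv, ev, sub_eq_iff_eq_add]
  have hip : ∀ i j : Fin 3, ip (e i) (e j) = if i = j then 1 else 0 := by
    intro i j
    simp [ip, ev, eq_comm]
  have hric : ∀ x y : V, ricci br nabla x y = -(3/2) * (l1 - l2)^2 * ip x y := by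
    intro x y
    simp only [ricci, hR, ip, Fin.sum_univ_three, ev]
    simp
    ring
  have hsc : scalc br nabla = -(9/2) * (l1 - l2)^2 := by
    simp only [scalc, hric, hip, Fin.sum_univ_three]
    simp
    ring
  refine ⟨?_, ⟨?_, ?_, ?_, ?_, ?_⟩, ⟨?_, ?_, ?_⟩, ⟨?_, hsc, ?_⟩, ?_⟩
  · intro x y z
    ext k
    simp only [hbr]
    fin_cases k <;> simp <;> ring
  · simp [hF, hnb, ev]; ring
  · simp [hF, hnb, ev]; ring
  · simp [hF, hnb, ev]; ring
  · intro k
    fin_cases k <;> simp [lee, Fin.sum_univ_three, hF, hnb, ev] <;> ring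
  · intro k
    fin_cases k <;> simp [leeStar, hQ, Fin.sum_univ_three, hF, hnb, ev] <;> ring
  · simp [hR, hip]
  · simp [hR, hip]
  · simp [hR, hip]
  · intro i j
    rw [hric, hip]
    split_ifs <;> ring
  · intro x y
    rw [hric, hsc]
    ring
  · intro x y hxy
    rw [hR]
    have hne : ip x x * ip y y - ip x y ^ 2 ≠ 0 := by
      intro h0
      have hL : (x 0 * y 1 - x 1 * y 0)^2 + (x 0 * y 2 - x 2 * y 0)^2
          + (x 1 * y 2 - x 2 * y 1)^2 = 0 := by
        rw [← h0]
        simp only [ip, Fin.sum_univ_three]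
        ring
      have c1 : x 0 * y 1 - x 1 * y 0 = 0 := by
        apply pow_eq_zero_iff (two_ne_zero) |>.mp
        nlinarith [sq_nonneg (x 0 * y 1 - x 1 * y 0), sq_nonneg (x 0 * y 2 - x 2 * y 0),
          sq_nonneg (x 1 * y 2 - x 2 * y 1)]
      have c2 : x 0 * y 2 - x 2 * y 0 = 0 := by
        apply pow_eq_zero_iff (two_ne_zero) |>.mp
        nlinarith [sq_nonneg (x 0 * y 1 - x 1 * y 0), sq_nonneg (x 0 * y 2 - x 2 * y 0),
          sq_nonneg (x 1 * y 2 - x 2 * y 1)]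
      have c3 : x 1 * y 2 - x 2 * y 1 = 0 := by
        apply pow_eq_zero_iff (two_ne_zero) |>.mp
        nlinarith [sq_nonneg (x 0 * y 1 - x 1 * y 0), sq_nonneg (x 0 * y 2 - x 2 * y 0),
          sq_nonneg (x 1 * y 2 - x 2 * y 1)]
      rw [LinearIndependent.pair_iff] at hxy
      have key : ∀ k, x k = 0 := by
        intro k
        have := (hxy (y k) (-(x k)) (by
          ext j
          fin_cases k <;> fin_cases j <;> simp <;> linarith)).2
        linarith
      have hx0 : x = 0 := funext key
      have := (hxy 1 0 (by simp [hx0])).1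
      exact one_ne_zero this
    have hs : ip y x = ip x y := by
      simp only [ip, mul_comm]
    rw [hs, ← pow_two (ip x y), mul_div_assoc, div_self hne, mul_one]
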